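/- arXiv:1507.00118 — 2 statements merged into one kernel-verified Lean document; each statement's English description precedes it below -/
import Mathlib

section
/- Let C be an abelian category. Then the category Ind(C) of ind-objects of C is abelian, and the canonical functor ι : C → Ind(C) is fully faithful and exact. -/
open CategoryTheory CategoryTheory.Limits

section

universe v u

theorem IndAux.leftExact {C : Type u} [Category.{v} C] {A : Cᵒᵖ ⥤ Type v} (hA : IsIndObject A) :
    leftExactFunctor Cᵒᵖ (Type v) A := by
  obtain ⟨⟨P⟩⟩ := hA
  refine ⟨fun J _ _ => ?_⟩
  have := ObjectProperty.prop_of_isColimit (ObjectProperty.preservesLimitsOfShape J) P.isColimit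
    (fun i => by
      change PreservesLimitsOfShape J (yoneda.obj (P.F.obj i))
      infer_instance)
  exact this

attribute [local instance] HasFiniteBiproducts.of_hasFiniteCoproducts in
noncomputable abbrev IndAux.preadditive (C : Type u) [Category.{v} C] [Preadditive C]
    [HasFiniteColimits C] : Preadditive (Ind C) :=
  .ofFullyFaithful ((((Ind.equivalence C).fullyFaithfulFunctor.comp
    (ObjectProperty.fullyFaithfulιOfLE (fun _ h => IndAux.leftExact h))).comp
    (AddCommGrpCat.leftExactFunctorForgetEquivalence Cᵒᵖ).symm.fullyFaithfulFunctor).comp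
      (ObjectProperty.fullyFaithfulι _))


attribute [local instance] IndAux.preadditive in
theorem IndAux.hasFiniteBiproducts (C : Type u) [Category.{v} C] [Preadditive C]
    [HasFiniteColimits C] : HasFiniteBiproducts (Ind C) :=
  HasFiniteBiproducts.of_hasFiniteCoproducts


attribute [local instance] IndAux.preadditive IndAux.hasFiniteBiproducts in
open CategoryTheory.Abelian in
theorem IndAux.isIso {C : Type u} [Category.{v} C] [Abelian C] {X Y : Ind C} (f : X ⟶ Y) :
    IsIso (Abelian.coimageImageComparison f) := by
  obtain ⟨I, _, _, F, G, ϕ, ⟨i⟩⟩ := Ind.exists_nonempty_arrow_mk_iso_ind_lim (f := f)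
  let i' := coimageImageComparisonFunctor.mapIso i
  change Arrow.mk (coimageImageComparison f) ≅ Arrow.mk (coimageImageComparison ((Ind.lim I).map ϕ)) at i'
  have := Iso.isIso_hom i'
  rw [Arrow.isIso_iff_isIso_of_isIso i'.hom,
    Arrow.isIso_iff_isIso_of_isIso (PreservesCoimageImageComparison.iso (Ind.lim I) ϕ).inv]
  infer_instance

attribute [local instance] IndAux.preadditive IndAux.hasFiniteBiproducts in
theorem IndAux.nonempty_abelian (C : Type u) [Category.{v} C] [Abelian C] :
    Nonempty (Abelian (Ind C)) := by
  have := fun (X Y : Ind C) (f : X ⟶ Y) => IndAux.isIso f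
  exact ⟨.ofCoimageImageComparisonIsIso⟩

end

/-- If `C` is an abelian category, then `Ind C` is abelian, and the canonical
functor `ι = Ind.yoneda : C ⥤ Ind C` is fully faithful and exact. -/
theorem stmt_0 {C : Type u} [Category.{v} C] [Abelian C] :
    Nonempty (Abelian (Ind C)) ∧
    (Ind.yoneda : C ⥤ Ind C).Full ∧
    (Ind.yoneda : C ⥤ Ind C).Faithful ∧
    Nonempty (PreservesFiniteLimits (Ind.yoneda : C ⥤ Ind C)) ∧
    Nonempty (PreservesFiniteColimits (Ind.yoneda : C ⥤ Ind C)) := by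
  exact ⟨IndAux.nonempty_abelian C, inferInstance, inferInstance, ⟨inferInstance⟩, ⟨inferInstance⟩⟩
end

section
/- Let C be an abelian category with enough injectives. Then Ind(C) has enough quasi-injectives: every object of Ind(C) admits a monomorphism into a quasi-injective object, where an object A ∈ Ind(C) is called quasi-injective if the functor Hom_{Ind(C)}(−, A), restricted to C, is exact. -/
open CategoryTheory CategoryTheory.Limits ZeroObject

namespace Stmt5

/-- An object `A ∈ Ind C` is quasi-injective if `Hom_{Ind C}(ι(−), A)` turns
every short exact sequence `0 → X₁ → X₂ → X₃ → 0` in `C` into an exact sequence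
`0 → Hom(ιX₃, A) → Hom(ιX₂, A) → Hom(ιX₁, A) → 0`:  precomposition with `ι(g)`
is injective, precomposition with `ι(f)` is surjective, and a morphism
`ιX₂ ⟶ A` factors through `ι(g)` if and only if its composite with `ι(f)` is
zero (i.e. factors through the image of the zero object). -/
def IsQuasiInjective {C : Type u} [Category.{v} C] [Abelian C] (A : Ind C) : Prop :=
  ∀ S : ShortComplex C, S.ShortExact →
    (Function.Injective
        (fun h : Ind.yoneda.obj S.X₃ ⟶ A => Ind.yoneda.map S.g ≫ h)) ∧
    (Function.Surjective
        (fun h : Ind.yoneda.obj S.X₂ ⟶ A => Ind.yoneda.map S.f ≫ h)) ∧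
    (∀ h : Ind.yoneda.obj S.X₂ ⟶ A,
      (∃ h' : Ind.yoneda.obj S.X₃ ⟶ A, h = Ind.yoneda.map S.g ≫ h') ↔
      (∃ v : Ind.yoneda.obj (0 : C) ⟶ A,
        Ind.yoneda.map S.f ≫ h = Ind.yoneda.map (0 : S.X₁ ⟶ (0 : C)) ≫ v))


noncomputable def homIso {C : Type u} [Category.{v} C] (A : Ind C) :
    Ind.yoneda.op ⋙ yoneda.obj A ≅ (Ind.inclusion C).obj A :=
  NatIso.ofComponents (fun X =>
    Equiv.toIso <| (Ind.inclusion.fullyFaithful.homEquiv).trans <|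
      ((Ind.yonedaCompInclusion.app X.unop).homCongr (Iso.refl _)).trans yonedaEquiv)
    (by
      intro X Y f
      ext h
      have e : Ind.yonedaCompInclusion.inv.app Y.unop ≫
          (Ind.inclusion C).map (Ind.yoneda.map f.unop) =
          yoneda.map f.unop ≫ Ind.yonedaCompInclusion.inv.app X.unop :=
        (Ind.yonedaCompInclusion.inv.naturality f.unop).symm
      have e' := yonedaEquiv_naturality
        (Ind.yonedaCompInclusion.inv.app X.unop ≫ (Ind.inclusion C).map h) f.unop
      simp only [Quiver.Hom.op_unop] at e'
      simp
      rw [reassoc_of% e]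
      exact e'.symm)

lemma homIso_naturality {C : Type u} [Category.{v} C] {A B : Ind C} (k : A ⟶ B) (X : C)
    (g : Ind.yoneda.obj X ⟶ A) :
    (homIso B).hom.app (Opposite.op X) (g ≫ k) =
      ((Ind.inclusion C).map k).app (Opposite.op X) ((homIso A).hom.app (Opposite.op X) g) := by
  simp [homIso, yonedaEquiv_apply]

lemma preservesFiniteLimits_inclusion_obj {C : Type u} [Category.{v} C] [HasFiniteColimits C]
    (A : Ind C) : PreservesFiniteLimits ((Ind.inclusion C).obj A) := by
  have : PreservesFiniteLimits (Ind.yoneda (C := C)).op := preservesFiniteLimits_op _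
  have : PreservesFiniteLimits (yoneda.obj A) := inferInstance
  exact preservesFiniteLimits_of_natIso (homIso A)

section
variable {C : Type u} [Category.{v} C] [Abelian C]

noncomputable def toLex : Ind C ⥤ LeftExactFunctor Cᵒᵖ (Type v) :=
  ObjectProperty.lift _ (Ind.inclusion C) (fun A => preservesFiniteLimits_inclusion_obj A)

noncomputable def toLexFF : (toLex (C := C)).FullyFaithful :=
  Functor.FullyFaithful.ofCompFaithful (G := ObjectProperty.ι _)
    (Ind.inclusion.fullyFaithful (C := C))

attribute [local instance] HasFiniteBiproducts.of_hasFiniteCoproducts in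
noncomputable instance indPreadditive : Preadditive (Ind C) :=
  .ofFullyFaithful ((toLexFF.comp
    (AddCommGrpCat.leftExactFunctorForgetEquivalence Cᵒᵖ).symm.fullyFaithfulFunctor).comp
      (ObjectProperty.fullyFaithfulι _))


instance : HasFiniteBiproducts (Ind C) :=
  HasFiniteBiproducts.of_hasFiniteCoproducts

open CategoryTheory.Abelian in
instance {X Y : Ind C} (f : X ⟶ Y) : IsIso (Abelian.coimageImageComparison f) := by
  obtain ⟨I, _, _, F, G, ϕ, ⟨i⟩⟩ := Ind.exists_nonempty_arrow_mk_iso_ind_lim (f := f)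
  let i' : Arrow.mk (Abelian.coimageImageComparison f) ≅
      Arrow.mk (Abelian.coimageImageComparison ((Ind.lim I).map ϕ)) :=
    coimageImageComparisonFunctor.mapIso i
  have := Iso.isIso_hom i'
  rw [Arrow.isIso_iff_isIso_of_isIso i'.hom,
    Arrow.isIso_iff_isIso_of_isIso (PreservesCoimageImageComparison.iso (Ind.lim I) ϕ).inv]
  infer_instance

noncomputable instance indAbelian : Abelian (Ind C) :=
  .ofCoimageImageComparisonIsIso

end

/-- Maps from objects of `C` to filtered colimits factor through a stage. -/
lemma exists_factor {C : Type u} [Category.{v} C] {J : Type v} [SmallCategory J] [IsFiltered J]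
    (F : J ⥤ Ind C) (X : C)
    (h : Ind.yoneda.obj X ⟶ colimit F) :
    ∃ (j : J) (g : Ind.yoneda.obj X ⟶ F.obj j), g ≫ colimit.ι F j = h := by
  let c := isColimitOfPreserves (Ind.inclusion C ⋙ (evaluation _ _).obj (Opposite.op X))
    (colimit.isColimit F)
  obtain ⟨j, y, hy⟩ := Types.jointly_surjective_of_isColimit c ((homIso (colimit F)).hom.app (Opposite.op X) h)
  refine ⟨j, (homIso (F.obj j)).inv.app (Opposite.op X) y, ?_⟩
  apply ((homIso (colimit F)).app (Opposite.op X)).toEquiv.injective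
  refine Eq.trans (homIso_naturality _ _ _) (Eq.trans ?_ hy)
  simp

lemma isQuasiInjective_core {C : Type u} [Category.{v} C] [Abelian C] (A : Ind C)
    (S : ShortComplex C) (hS : S.ShortExact) :
    (Function.Injective
        (fun h : Ind.yoneda.obj S.X₃ ⟶ A => Ind.yoneda.map S.g ≫ h)) ∧ 
    (∀ h : Ind.yoneda.obj S.X₂ ⟶ A,
      (∃ h' : Ind.yoneda.obj S.X₃ ⟶ A, h = Ind.yoneda.map S.g ≫ h') ↔
      (∃ v : Ind.yoneda.obj (0 : C) ⟶ A,
        Ind.yoneda.map S.f ≫ h = Ind.yoneda.map (0 : S.X₁ ⟶ (0 : C)) ≫ v)) := by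
  have := hS.epi_g
  refine ⟨fun a b hab => (cancel_epi (Ind.yoneda.map S.g)).1 hab, fun h => ⟨?_, ?_⟩⟩
  · rintro ⟨h', rfl⟩
    refine ⟨Ind.yoneda.map (0 : (0 : C) ⟶ S.X₃) ≫ h', ?_⟩
    simp only [← Functor.map_comp_assoc, S.zero, comp_zero]
  · rintro ⟨w, hw⟩
    have hv : w = Ind.yoneda.map (0 : (0 : C) ⟶ S.X₂) ≫ h :=
      (IsInitial.isInitialObj Ind.yoneda _ HasZeroObject.zeroIsInitial).hom_ext _ _
    have hc := isColimitCoforkMapOfIsColimit Ind.yoneda _ hS.exact.gIsCokernel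
    have e : Ind.yoneda.map S.f ≫ h = Ind.yoneda.map (0 : S.X₁ ⟶ S.X₂) ≫ h := by
      rw [hw, hv, ← Functor.map_comp_assoc, comp_zero]
    exact ⟨Cofork.IsColimit.desc hc h e, (Cofork.IsColimit.π_desc' hc h e).symm⟩

lemma step {C : Type u} [Category.{v} C] [Abelian C] [EnoughInjectives C] (A : Ind C) :
    ∃ (B : Ind C) (m : A ⟶ B), Mono m ∧ ∀ (X : C) (f : Ind.yoneda.obj X ⟶ A),
      ∃ (I : C) (_ : Injective I) (a : X ⟶ I) (b : Ind.yoneda.obj I ⟶ B),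
        f ≫ m = Ind.yoneda.map a ≫ b := by
  let P := A.presentation
  let s : (∐ fun i : P.I => Ind.yoneda.obj (P.F.obj i)) ⟶
      (∐ fun i : P.I => Ind.yoneda.obj (Injective.under (P.F.obj i))) :=
    Limits.Sigma.map fun i => Ind.yoneda.map (Injective.ι (P.F.obj i))
  have : Mono s := by
    have := AB4.of_AB5 (Ind C)
    infer_instance
  let t : (∐ fun i : P.I => Ind.yoneda.obj (P.F.obj i)) ⟶ A :=
    Sigma.desc fun i => colimit.ι (P.F ⋙ Ind.yoneda) i ≫ A.colimitPresentationCompYoneda.hom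
  refine ⟨pushout s t, pushout.inr s t, inferInstance, fun X f => ?_⟩
  obtain ⟨i, g, hg⟩ := exists_factor (P.F ⋙ Ind.yoneda) X (f ≫ A.colimitPresentationCompYoneda.inv)
  obtain ⟨g, rfl⟩ := Ind.yoneda.map_surjective g
  have hf : f = Ind.yoneda.map g ≫ Sigma.ι (fun i : P.I => Ind.yoneda.obj (P.F.obj i)) i ≫ t := by
    rw [Iso.eq_comp_inv] at hg
    simp [t, ← hg, P]
  refine ⟨Injective.under (P.F.obj i), inferInstance, g ≫ Injective.ι _,
    Sigma.ι (fun i : P.I => Ind.yoneda.obj (Injective.under (P.F.obj i))) i ≫ pushout.inl s t, ?_⟩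
  rw [hf]
  simp only [Category.assoc, ← pushout.condition, s, Functor.map_comp]
  simp

/-- If the abelian category `C` has enough injectives, then `Ind C` has enough
quasi-injectives: every ind-object admits a monomorphism into a quasi-injective
ind-object. -/
theorem stmt_5 {C : Type u} [Category.{v} C] [Abelian C] [EnoughInjectives C]
    (A : Ind C) :
    ∃ (Q : Ind C) (m : A ⟶ Q), Mono m ∧ IsQuasiInjective Q := by
  choose B m hm hB using step (C := C)
  let X : ℕ → Ind C := fun n => Nat.rec A (fun _ Y => B Y) n
  let F₀ : ℕ ⥤ Ind C := Functor.ofSequence (X := X) (fun n => m (X n))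
  have hF₀ (n : ℕ) : Mono (F₀.map (homOfLE (Nat.le_add_right n 1))) := by
    rw [Functor.ofSequence_map_homOfLE_succ]
    exact hm _
  have hF₀' (i j : ℕ) (f : i ⟶ j) : Mono (F₀.map f) := by
    obtain ⟨k, rfl⟩ := Nat.exists_eq_add_of_le (leOfHom f)
    induction k with
    | zero =>
      obtain rfl : f = 𝟙 _ := Subsingleton.elim _ _
      infer_instance
    | succ k ih =>
      have := ih (homOfLE (Nat.le_add_right i k))
      have := hF₀ (i + k)
      obtain rfl : f = homOfLE (Nat.le_add_right i k) ≫ homOfLE (Nat.le_add_right (i+k) 1) :=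
        Subsingleton.elim _ _
      rw [Functor.map_comp]
      infer_instance
  let F : ULift.{v} ℕ ⥤ Ind C := (show Monotone (ULift.down : ULift.{v} ℕ → ℕ) from fun _ _ h => h).functor ⋙ F₀
  have hF (i j : ULift.{v} ℕ) (f : i ⟶ j) : Mono (F.map f) := hF₀' i.down j.down (homOfLE f.down.down)
  refine ⟨colimit F, colimit.ι F ⟨0⟩, (colimit.isColimit F).mono_ι_app_of_isFiltered _, ?_⟩
  intro S hS
  obtain ⟨h1, h2⟩ := isQuasiInjective_core (colimit F) S hS
  refine ⟨h1, fun h => ?_, h2⟩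
  have := hS.mono_f
  obtain ⟨⟨n⟩, g, rfl⟩ := exists_factor F _ h
  obtain ⟨p, hp⟩ : ∃ p : B (X n) ⟶ colimit F,
      m (X n) ≫ p = (colimit.ι F ⟨n⟩ : X n ⟶ colimit F) := by
    refine ⟨colimit.ι F ⟨n + 1⟩, ?_⟩
    refine Eq.trans ?_ (colimit.w F
      (homOfLE (show (⟨n⟩ : ULift.{v} ℕ) ≤ ⟨n + 1⟩ from Nat.le_add_right n 1)))
    have e : m (X n) = F₀.map (homOfLE (Nat.le_add_right n 1)) :=
      (Functor.ofSequence_map_homOfLE_succ (X := X) (fun n => m (X n)) n).symm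
    rw [e]
    rfl
  obtain ⟨I, _, a, b, hab⟩ := hB (X n) _ g
  refine ⟨Ind.yoneda.map (Injective.factorThru a S.f) ≫ b ≫ p, ?_⟩
  dsimp only
  rw [← Functor.map_comp_assoc, Injective.comp_factorThru, ← reassoc_of% hab]
  exact (Category.assoc _ _ _).trans <| congrArg (fun q => g ≫ q) hp

end Stmt5
end
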